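/- Let [b_1,…,b_ρ] be a T-chain with Hirzebruch–Jung value n/q, and let n'/q' (in lowest terms, n' > q' ≥ 1) be the Hirzebruch–Jung value of the T-chain [2, b_1,…,b_{ρ−1}, b_ρ + 1] (respectively of [b_1 + 1, b_2,…,b_ρ, 2]). Then β(n'/q') = β(n/q). -/

import Mathlib

/-- Hirzebruch–Jung continued fraction: `hj [b] = b`, `hj (b :: l) = b - 1 / hj l`. -/
def hj : List ℚ → ℚ
  | [] => 0
  | b :: l => b - 1 / hj l

/-- `g = gcd(n, q+1)`. -/
def Tg (n q : ℕ) : ℕ := Nat.gcd n (q + 1)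

/-- `β(n/q) = gcd(n, q+1)² / n ∈ ℚ`. -/
def Tbeta (n q : ℕ) : ℚ := (Tg n q : ℚ) ^ 2 / (n : ℚ)

/-- `n/q` (with `n > q ≥ 1` coprime) is a T-fraction if `n ∣ (q+1)²` and `q ≠ n-1`. -/
def IsTFraction (n q : ℕ) : Prop :=
  1 ≤ q ∧ q < n ∧ Nat.Coprime n q ∧ n ∣ (q + 1) ^ 2 ∧ q ≠ n - 1

/-!
The matrices `!![b, -1; 1, 0] = T ^ b * S` turn Hirzebruch–Jung continued fractions into products
in `SL(2, ℤ)`: the value of a chain is the ratio of the entries of the first column of its product.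
For a T-chain, write `n = d * m ^ 2` and `q + 1 = d * m * a` with `m`, `a` coprime, so that
`β (n / q) = d`. Then the product is the sum of a fixed matrix and a rank one matrix,
`!![0, 1; -1, 1] + d • !![m; a] * !![m, a - m]`, since the determinant determines the second column
once its first entry is known to lie in `(-n, 0]`. The first step multiplies the product by
`T ^ 2 * S` on the left and by `S⁻¹ * T * S` on the right, the second by `T` on the left and by
`T ^ 2 * S` on the right; both fix `!![0, 1; -1, 1]` and replace `(m, a)` by `(2 * m - a, m)` and by
`(m + a, a)` respectively, while `d` does not change.
-/

section

open ModularGroup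
open scoped MatrixGroups Matrix

/-- The product of the matrices `!![b, -1; 1, 0]` over the entries `b` of a chain, whose first
column gives the numerator and the denominator of the Hirzebruch–Jung continued fraction. The
factors are written `T ^ b * S` so that the product lies in `SL(2, ℤ)`. -/
def hjMatrix (L : List ℤ) : SL(2, ℤ) :=
  (L.map fun b ↦ T ^ b * S).prod

/-- The normal form of the matrix of a T-chain with value `d * m ^ 2 / (d * m * a - 1)`. -/
def tMatrix (d m a : ℤ) : SL(2, ℤ) :=
  ⟨!![d * m ^ 2, 1 - d * m * (m - a); d * m * a - 1, 1 - d * a * (m - a)], by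
    rw [Matrix.det_fin_two_of]
    ring⟩

lemma coe_tMatrix (d m a : ℤ) :
    (tMatrix d m a : Matrix (Fin 2) (Fin 2) ℤ) =
      !![d * m ^ 2, 1 - d * m * (m - a); d * m * a - 1, 1 - d * a * (m - a)] :=
  rfl

lemma hjMatrix_nil : hjMatrix [] = 1 := by
  simp [hjMatrix]

lemma hjMatrix_cons (b : ℤ) (L : List ℤ) : hjMatrix (b :: L) = T ^ b * S * hjMatrix L := by
  simp [hjMatrix]

lemma hjMatrix_append (L L' : List ℤ) : hjMatrix (L ++ L') = hjMatrix L * hjMatrix L' := by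
  simp [hjMatrix]

lemma coe_hjMatrix_cons (b : ℤ) (L : List ℤ) :
    (hjMatrix (b :: L) : Matrix (Fin 2) (Fin 2) ℤ) = !![b, -1; 1, 0] * hjMatrix L := by
  simp [hjMatrix_cons, coe_T_zpow, coe_S]

lemma le_hjMatrix_mulVec {L : List ℤ} (hL : ∀ b ∈ L, 2 ≤ b) {v : Fin 2 → ℤ}
    (hv₀ : 0 ≤ v 0) (hv₁ : v 1 ≤ v 0) :
    v 0 ≤ ((hjMatrix L).1 *ᵥ v) 0 ∧ ((hjMatrix L).1 *ᵥ v) 1 ≤ ((hjMatrix L).1 *ᵥ v) 0 := by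
  induction L with
  | nil => simpa [hjMatrix_nil] using hv₁
  | cons b L ih =>
    obtain ⟨hb, hL⟩ := List.forall_mem_cons.mp hL
    obtain ⟨ih₀, ih₁⟩ := ih hL
    rw [coe_hjMatrix_cons, ← Matrix.mulVec_mulVec]
    generalize (hjMatrix L).1 *ᵥ v = w at *
    suffices v 0 ≤ b * w 0 - w 1 ∧ w 0 ≤ b * w 0 - w 1 by
      simpa [Matrix.mulVec, dotProduct, Fin.sum_univ_two, sub_eq_add_neg] using this
    have hbw : 2 * w 0 ≤ b * w 0 := mul_le_mul_of_nonneg_right hb (hv₀.trans ih₀)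
    constructor <;> linarith

lemma hjMatrix_apply_zero_zero_pos {L : List ℤ} (hL : ∀ b ∈ L, 2 ≤ b) : 0 < hjMatrix L 0 0 := by
  have : 1 ≤ hjMatrix L 0 0 := by
    simpa using (le_hjMatrix_mulVec hL (v := ![1, 0]) (by simp) (by simp)).1
  lia

lemma hjMatrix_apply_zero_one_nonpos {L : List ℤ} (hL : ∀ b ∈ L, 2 ≤ b) : hjMatrix L 0 1 ≤ 0 := by
  have := (le_hjMatrix_mulVec hL (v := ![0, -1]) (by simp) (by simp)).1
  simpa [Matrix.mulVec, dotProduct, Fin.sum_univ_two] using this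

lemma neg_lt_hjMatrix_apply_zero_one {L : List ℤ} (hL : ∀ b ∈ L, 2 ≤ b) :
    -hjMatrix L 0 0 < hjMatrix L 0 1 := by
  have : 1 ≤ hjMatrix L 0 0 + hjMatrix L 0 1 := by
    simpa [Matrix.mulVec, dotProduct, Fin.sum_univ_two] using
      (le_hjMatrix_mulVec hL (v := ![1, 1]) (by simp) (by simp)).1
  lia

lemma hj_map_cast {L : List ℤ} (hL : ∀ b ∈ L, 2 ≤ b) :
    hj (L.map Int.cast) = (hjMatrix L 0 0 : ℚ) / hjMatrix L 1 0 := by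
  induction L with
  | nil => simp [hj, hjMatrix_nil]
  | cons b L ih =>
    have hL' := (List.forall_mem_cons.mp hL).2
    have hne : (hjMatrix L 0 0 : ℚ) ≠ 0 := mod_cast (hjMatrix_apply_zero_zero_pos hL').ne'
    have h₀ : hjMatrix (b :: L) 0 0 = b * hjMatrix L 0 0 - hjMatrix L 1 0 := by
      simp [coe_hjMatrix_cons, Matrix.mul_apply, sub_eq_add_neg]
    have h₁ : hjMatrix (b :: L) 1 0 = hjMatrix L 0 0 := by
      simp [coe_hjMatrix_cons, Matrix.mul_apply]
    rw [List.map_cons, hj, ih hL', h₀, h₁]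
    push_cast
    field_simp

lemma hjMatrix_col_zero_of_hj_eq {L : List ℤ} (hL : ∀ b ∈ L, 2 ≤ b) {n q : ℕ} (hn : 0 < n)
    (hq : 0 < q) (hcop : n.Coprime q) (hval : hj (L.map Int.cast) = (n : ℚ) / q) :
    hjMatrix L 0 0 = n ∧ hjMatrix L 1 0 = q := by
  rw [hj_map_cast hL] at hval
  have h₀ := hjMatrix_apply_zero_zero_pos hL
  have hquot : (0 : ℚ) < hjMatrix L 0 0 / hjMatrix L 1 0 := by rw [hval]; positivity
  have h₁ : 0 < hjMatrix L 1 0 :=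
    mod_cast (div_pos_iff_of_pos_left (Int.cast_pos.mpr h₀)).mp hquot
  exact Rat.div_int_inj h₁ (mod_cast hq)
    (Int.isCoprime_iff_nat_coprime.mp ((hjMatrix L).isCoprime_col 0)) hcop (by simpa using hval)

lemma eq_of_col_zero_eq_of_abs_sub_lt {A B : SL(2, ℤ)} (h₀ : A 0 0 = B 0 0) (h₁ : A 1 0 = B 1 0)
    (hlt : |A 0 1 - B 0 1| < A 0 0) : A = B := by
  have hA := A.det_coe
  have hB := B.det_coe
  rw [Matrix.det_fin_two] at hA hB
  rw [← h₀, ← h₁] at hB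
  have hdvd : A 0 0 ∣ A 0 1 - B 0 1 :=
    (A.isCoprime_col 0).dvd_of_dvd_mul_left ⟨A 1 1 - B 1 1, by linear_combination hB - hA⟩
  have h₀₁ : A 0 1 = B 0 1 := sub_eq_zero.mp (Int.eq_zero_of_abs_lt_dvd hdvd hlt)
  have hne : A 0 0 ≠ 0 := ((abs_nonneg _).trans_lt hlt).ne'
  have h₁₁ : A 1 1 = B 1 1 :=
    mul_left_cancel₀ hne (by linear_combination hA - hB + A 1 0 * h₀₁)
  ext i j
  fin_cases i <;> fin_cases j <;> assumption

lemma exists_eq_mul_sq_of_dvd_sq {n k : ℕ} (h : n ∣ k ^ 2) :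
    ∃ d m a : ℕ, m.Coprime a ∧ n = d * m ^ 2 ∧ k = d * m * a := by
  obtain ⟨m, a, hma, hnm, hka⟩ := Nat.exists_coprime n k
  generalize n.gcd k = g at hnm hka
  subst hnm hka
  obtain rfl | hg := Nat.eq_zero_or_pos g
  · exact ⟨0, 1, 1, by simp⟩
  have hm : m ∣ a ^ 2 * g := by
    refine Nat.dvd_of_mul_dvd_mul_right hg ?_
    convert h using 1
    ring
  obtain ⟨d, rfl⟩ := (hma.pow_right 2).dvd_of_dvd_mul_left hm
  exact ⟨d, m, a, hma, by ring, by ring⟩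

lemma Tbeta_eq {d m a : ℤ} {n q : ℕ} (hn : n ≠ 0) (hma : IsCoprime m a) (hnd : (n : ℤ) = d * m ^ 2)
    (hqd : (q : ℤ) = d * m * a - 1) : Tbeta n q = d := by
  have hg : (Tg n q : ℤ) = |d * m| := by
    have hn' : (n : ℤ) = d * m * m := by rw [hnd]; ring
    have hq' : ((q + 1 : ℕ) : ℤ) = d * m * a := by push_cast; rw [hqd]; ring
    rw [Tg, ← Int.gcd_natCast_natCast, hn', hq', Int.gcd_mul_left,
      Int.isCoprime_iff_gcd_eq_one.mp hma, mul_one, Int.natCast_natAbs]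
  have hg_sq : (Tg n q : ℚ) ^ 2 = d * n := by
    have : (Tg n q : ℤ) ^ 2 = d * n := by rw [hg, sq_abs, hnd]; ring
    exact mod_cast this
  rw [Tbeta, hg_sq, mul_div_cancel_right₀ _ (Nat.cast_ne_zero.mpr hn)]

lemma Tbeta_eq_of_hjMatrix_eq_tMatrix {L : List ℤ} (hL : ∀ b ∈ L, 2 ≤ b) {n q : ℕ} (hn : 0 < n)
    (hq : 0 < q) (hcop : n.Coprime q) (hval : hj (L.map Int.cast) = (n : ℚ) / q)
    {d m a : ℤ} (hma : IsCoprime m a) (h : hjMatrix L = tMatrix d m a) : Tbeta n q = d := by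
  obtain ⟨h₀, h₁⟩ := hjMatrix_col_zero_of_hj_eq hL hn hq hcop hval
  rw [h] at h₀ h₁
  exact Tbeta_eq hn.ne' hma h₀.symm h₁.symm

lemma IsTFraction.exists_hjMatrix_eq_tMatrix {n q : ℕ} (hT : IsTFraction n q) {L : List ℤ}
    (hL : ∀ b ∈ L, 2 ≤ b) (hval : hj (L.map Int.cast) = (n : ℚ) / q) :
    ∃ d m a : ℤ, IsCoprime m a ∧ hjMatrix L = tMatrix d m a := by
  obtain ⟨hq, hqn, hcop, hdvd, hne⟩ := hT
  obtain ⟨d, m, a, hma, hnd, hqd⟩ := exists_eq_mul_sq_of_dvd_sq hdvd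
  obtain ⟨h₀, h₁⟩ := hjMatrix_col_zero_of_hj_eq hL (by lia) hq hcop hval
  refine ⟨d, m, a, Nat.isCoprime_iff_coprime.mpr hma, ?_⟩
  zify at hnd hqd
  have h₀₁ : tMatrix d m a 0 1 = q + 2 - n := by
    change 1 - (d : ℤ) * m * (m - a) = q + 2 - n
    linear_combination hnd - hqd
  refine eq_of_col_zero_eq_of_abs_sub_lt (h₀.trans hnd) (h₁.trans (eq_sub_of_add_eq hqd)) ?_
  have hlower := neg_lt_hjMatrix_apply_zero_one hL
  have hupper := hjMatrix_apply_zero_one_nonpos hL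
  rw [h₀₁, abs_lt]
  lia

lemma hjMatrix_two_cons_dropLast {L : List ℤ} (hL : L ≠ []) :
    hjMatrix (2 :: (L.dropLast ++ [L.getLast! + 1])) =
      T ^ 2 * S * hjMatrix L * (S⁻¹ * T * S) := by
  obtain ⟨l, b, rfl⟩ := (List.eq_nil_or_concat' L).resolve_left hL
  simp [hjMatrix_cons, hjMatrix_append, hjMatrix_nil, zpow_add, zpow_ofNat, mul_assoc]

lemma hjMatrix_head_add_one_cons {L : List ℤ} (hL : L ≠ []) :
    hjMatrix ((L.head! + 1) :: (L.tail ++ [2])) = T * hjMatrix L * (T ^ 2 * S) := by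
  obtain ⟨b, l, rfl⟩ := List.exists_cons_of_ne_nil hL
  simp [hjMatrix_cons, hjMatrix_append, hjMatrix_nil, add_comm b, zpow_add, zpow_ofNat, mul_assoc]

lemma coe_T_sq_mul_S : ((T ^ 2 * S : SL(2, ℤ)) : Matrix (Fin 2) (Fin 2) ℤ) = !![2, -1; 1, 0] := by
  simp [coe_S, coe_T, pow_two]

lemma coe_S_inv_mul_T_mul_S :
    ((S⁻¹ * T * S : SL(2, ℤ)) : Matrix (Fin 2) (Fin 2) ℤ) = !![1, 0; -1, 1] := by
  simp [coe_S, coe_T]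

lemma T_sq_mul_S_mul_tMatrix_mul (d m a : ℤ) :
    T ^ 2 * S * tMatrix d m a * (S⁻¹ * T * S) = tMatrix d (2 * m - a) m := by
  apply Subtype.ext
  rw [Matrix.SpecialLinearGroup.coe_mul, Matrix.SpecialLinearGroup.coe_mul, coe_T_sq_mul_S,
    coe_S_inv_mul_T_mul_S, coe_tMatrix, coe_tMatrix, Matrix.mul_fin_two, Matrix.mul_fin_two]
  ring_nf

lemma T_mul_tMatrix_mul (d m a : ℤ) :
    T * tMatrix d m a * (T ^ 2 * S) = tMatrix d (m + a) a := by
  apply Subtype.ext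
  rw [Matrix.SpecialLinearGroup.coe_mul, Matrix.SpecialLinearGroup.coe_mul, coe_T, coe_T_sq_mul_S,
    coe_tMatrix, coe_tMatrix, Matrix.mul_fin_two, Matrix.mul_fin_two]
  ring_nf

lemma two_le_of_mem_two_cons_dropLast {L : List ℤ} (hne : L ≠ []) (hL : ∀ b ∈ L, 2 ≤ b) :
    ∀ b ∈ 2 :: (L.dropLast ++ [L.getLast! + 1]), 2 ≤ b := by
  obtain ⟨l, b, rfl⟩ := (List.eq_nil_or_concat' L).resolve_left hne
  simp only [List.forall_mem_append, List.forall_mem_cons] at hL ⊢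
  grind

lemma two_le_of_mem_head_add_one_cons {L : List ℤ} (hne : L ≠ []) (hL : ∀ b ∈ L, 2 ≤ b) :
    ∀ b ∈ (L.head! + 1) :: (L.tail ++ [2]), 2 ≤ b := by
  obtain ⟨b, l, rfl⟩ := List.exists_cons_of_ne_nil hne
  simp only [List.forall_mem_append, List.forall_mem_cons] at hL ⊢
  grind [List.head!_cons]

end

-- Without a type for `a`, the coercion lands on the list: it is read as `do let a ← L; pure ↑a`.
lemma map_coe_eq_map_cast (L : List ℤ) : L.map (fun a => (a : ℚ)) = List.map Int.cast L := by
  simp [List.map_eq_flatMap]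

/-- Let `[b_1,…,b_ρ]` be a T-chain with Hirzebruch–Jung value `n/q`, and let
`n₁/q₁` (in lowest terms, `n₁ > q₁ ≥ 1`) be the Hirzebruch–Jung value of
`[2, b_1,…,b_{ρ−1}, b_ρ + 1]` and `n₂/q₂` (in lowest terms, `n₂ > q₂ ≥ 1`) that of
`[b_1 + 1, b_2,…,b_ρ, 2]`. Then `β(n₁/q₁) = β(n/q)` and `β(n₂/q₂) = β(n/q)`. -/
theorem tchain_steps_beta (L : List ℤ) (n q n₁ q₁ n₂ q₂ : ℕ)
    (hL2 : ∀ a ∈ L, 2 ≤ a) (hT : IsTFraction n q)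
    (hval : hj (L.map (fun a => (a : ℚ))) = (n : ℚ) / (q : ℚ))
    (hq₁ : 1 ≤ q₁) (hq₁n : q₁ < n₁) (hcop₁ : Nat.Coprime n₁ q₁)
    (hval₁ : hj ((2 :: (L.dropLast ++ [L.getLast! + 1])).map (fun a => (a : ℚ)))
      = (n₁ : ℚ) / (q₁ : ℚ))
    (hq₂ : 1 ≤ q₂) (hq₂n : q₂ < n₂) (hcop₂ : Nat.Coprime n₂ q₂)
    (hval₂ : hj (((L.head! + 1) :: (L.tail ++ [2])).map (fun a => (a : ℚ)))
      = (n₂ : ℚ) / (q₂ : ℚ)) :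
    Tbeta n₁ q₁ = Tbeta n q ∧ Tbeta n₂ q₂ = Tbeta n q := by
  rw [map_coe_eq_map_cast] at hval hval₁ hval₂
  obtain ⟨d, m, a, hma, hA⟩ := hT.exists_hjMatrix_eq_tMatrix hL2 hval
  obtain ⟨hq, hqn, hcop, -⟩ := hT
  have hne : L ≠ [] := by
    rintro rfl
    have : (0 : ℚ) < n / q := div_pos (mod_cast hq.trans hqn.le) (mod_cast hq)
    simp [← hval, hj] at this
  have hβ : Tbeta n q = d :=
    Tbeta_eq_of_hjMatrix_eq_tMatrix hL2 (by lia) hq hcop hval hma hA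
  rw [hβ]
  constructor
  · refine Tbeta_eq_of_hjMatrix_eq_tMatrix (two_le_of_mem_two_cons_dropLast hne hL2) (by lia) hq₁
      hcop₁ hval₁ (m := 2 * m - a) (a := m) ?_ ?_
    · exact IsCoprime.mul_sub_right_left_iff.mpr hma.symm
    · rw [hjMatrix_two_cons_dropLast hne, hA, T_sq_mul_S_mul_tMatrix_mul]
  · refine Tbeta_eq_of_hjMatrix_eq_tMatrix (two_le_of_mem_head_add_one_cons hne hL2) (by lia) hq₂
      hcop₂ hval₂ (m := m + a) (a := a) ?_ ?_
    · simpa using hma.add_mul_left_left 1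
    · rw [hjMatrix_head_add_one_cons hne, hA, T_mul_tMatrix_mul]
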